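/- Let N ≥ 1, let μ_1,…,μ_N ∈ ℂ with Re μ_j ≠ 0 for every j, let α₀ > 0 and C ≥ α₀, and let V_1,…,V_N : [0,∞) → ℝ be measurable with α₀ ≤ V_j(s) ≤ C for all s ≥ 0 and all j. Define Q(t) := ∑_{j=1}^N (Re μ_j)² ∫₀ᵗ V_j(s) ds. Suppose E : [0,∞) → ℝ is continuous with E(0) > 0 and satisfies E(t) = E(0) − 2 ∑_{j=1}^N ∫₀ᵗ (Re μ_j)² V_j(s) E(s) ds for all t ≥ 0, and suppose m : [0,∞) → ℝ satisfies m(t)/Q(t) → 0 as t → ∞. Then ω := 2 α₀ ∑_{j=1}^N (Re μ_j)² is strictly positive and limsup_{t→∞} (1/t) · log( e^{2 m(t)} E(t) ) ≤ −ω. -/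

import Mathlib

open MeasureTheory Real Filter

lemma ode_sol (w : ℝ → ℝ) (hw : Measurable w) (K : ℝ) (h0 : ∀ s ≥ (0:ℝ), 0 ≤ w s)
    (hK : ∀ s ≥ (0:ℝ), w s ≤ K) (E : ℝ → ℝ) (hEc : ContinuousOn E (Set.Ici 0))
    (hE : ∀ t ≥ (0:ℝ), E t = E 0 - ∫ s in (0:ℝ)..t, w s * E s) (T : ℝ) (hT : 0 ≤ T) :
    E T = E 0 * Real.exp (-∫ s in (0:ℝ)..T, w s) := by
  have hu : Set.uIcc 0 T = Set.Icc 0 T := Set.uIcc_of_le hT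
  have hwi : ∀ a b : ℝ, 0 ≤ a → 0 ≤ b → IntervalIntegrable w volume a b := by
    intro a b ha hb
    refine (intervalIntegrable_const (c := K)).mono_fun hw.aestronglyMeasurable ?_
    refine (ae_restrict_iff' measurableSet_uIoc).2 (Eventually.of_forall fun x hx => ?_)
    have hx0 : 0 ≤ x := by
      have := hx.1
      exact (le_min ha hb).trans this.le
    beta_reduce
    rw [Real.norm_of_nonneg (h0 x hx0), Real.norm_eq_abs]
    exact (hK x hx0).trans (le_abs_self K)
  have hwE : IntervalIntegrable (fun s => w s * E s) volume 0 T :=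
    (hwi 0 T le_rfl hT).mul_continuousOn (hEc.mono (by rw [hu]; exact Set.Icc_subset_Ici_self))
  set P : ℝ → ℝ := fun x => ∫ s in (0:ℝ)..x, w s with hP
  set F : ℝ → ℝ := fun x => E 0 - ∫ s in (0:ℝ)..x, w s * E s with hF
  have hK0 : 0 ≤ K := (h0 0 le_rfl).trans (hK 0 le_rfl)
  have hPL : LipschitzOnWith K.toNNReal P (Set.uIcc 0 T) := by
    rw [hu]
    refine LipschitzOnWith.of_dist_le_mul fun x hx y hy => ?_
    rw [Real.coe_toNNReal _ hK0, Real.dist_eq, Real.dist_eq, hP]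
    simp only
    rw [intervalIntegral.integral_interval_sub_left (hwi _ _ le_rfl hx.1) (hwi _ _ le_rfl hy.1)]
    refine intervalIntegral.norm_integral_le_of_norm_le_const (f := w) (a := y) (b := x) fun s hs => ?_
    have hs0 : 0 ≤ s := (le_min hy.1 hx.1).trans hs.1.le
    rw [Real.norm_of_nonneg (h0 s hs0)]
    exact hK s hs0
  have hPb : Set.MapsTo P (Set.uIcc 0 T) (Set.Icc (-(K*T)) (K*T)) := by
    intro x hx
    have h1 := hPL.dist_le_mul x hx 0 (by simp)
    rw [hu] at hx
    have h2 : P 0 = 0 := by simp [hP]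
    rw [Real.coe_toNNReal _ hK0, h2, Real.dist_eq, Real.dist_eq, sub_zero, sub_zero,
      abs_of_nonneg hx.1] at h1
    have h3 : K * x ≤ K * T := mul_le_mul_of_nonneg_left hx.2 hK0
    exact abs_le.1 (h1.trans h3)
  obtain ⟨L, hL⟩ := (Real.contDiff_exp (n := 1)).contDiffOn.exists_lipschitzOnWith
    (by decide) (convex_Icc (-(K*T)) (K*T)) isCompact_Icc
  have hexp : AbsolutelyContinuousOnInterval (fun x => Real.exp (P x)) 0 T :=
    (hL.comp hPL hPb).absolutelyContinuousOnInterval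
  have hFac : AbsolutelyContinuousOnInterval F 0 T :=
    (LipschitzOnWith.absolutelyContinuousOnInterval (K := 0)
      ((LipschitzWith.const (E 0)).lipschitzOnWith)).fun_sub
    (hwE.absolutelyContinuousOnInterval_intervalIntegral (c := 0) (by simp))
  have hG := hFac.fun_mul hexp
  obtain ⟨c, hc⟩ := hG.const_of_ae_hasDerivAt_zero (by
    filter_upwards [(hwi 0 T le_rfl hT).ae_hasDerivAt_integral, hwE.ae_hasDerivAt_integral]
      with x h1 h2 hx
    have d1 := (h1 hx 0 (by simp)).exp
    have d2 := (h2 hx 0 (by simp)).const_sub (E 0)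
    have hx' := hx
    rw [hu] at hx'
    have := d2.mul d1
    refine this.congr_deriv ?_
    rw [← hE x hx'.1]
    ring)
  have e1 := hc 0 (by simp)
  have e2 := hc T (by simp)
  simp only [hF, hP] at e1 e2
  rw [← hE T hT] at e2
  simp at e1
  rw [Real.exp_neg, e1, ← e2]
  field_simp

open MeasureTheory Real Filter

/-- Full deterministic skeleton of the proof of Theorem 1.5: energy decay combined
with the martingale strong law of large numbers `m(t)/Q(t) → 0`, where
`Q(t) = ∑ j (Re μ j)² ∫₀ᵗ V j` is the quadratic variation of `Re M`. -/
theorem stmt_3 (N : ℕ) (hN : 1 ≤ N) (μ : Fin N → ℂ)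
    (hμ : ∀ j, (μ j).re ≠ 0)
    (α₀ C : ℝ) (hα₀ : 0 < α₀) (hC : α₀ ≤ C)
    (V : Fin N → ℝ → ℝ) (hVmeas : ∀ j, Measurable (V j))
    (hVlb : ∀ j, ∀ s ≥ (0:ℝ), α₀ ≤ V j s)
    (hVub : ∀ j, ∀ s ≥ (0:ℝ), V j s ≤ C)
    (Q : ℝ → ℝ)
    (hQ : ∀ t, Q t = ∑ j, (μ j).re ^ 2 * ∫ s in (0:ℝ)..t, V j s)
    (E : ℝ → ℝ) (hEcont : ContinuousOn E (Set.Ici 0)) (hE0 : 0 < E 0)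
    (hE : ∀ t ≥ (0:ℝ),
      E t = E 0 - 2 * ∑ j, ∫ s in (0:ℝ)..t, (μ j).re ^ 2 * V j s * E s)
    (m : ℝ → ℝ) (hm : Tendsto (fun t => m t / Q t) atTop (nhds 0)) :
    0 < 2 * α₀ * ∑ j, (μ j).re ^ 2 ∧
    Filter.limsup (fun t => (1 / t) * Real.log (Real.exp (2 * m t) * E t)) atTop
      ≤ -(2 * α₀ * ∑ j, (μ j).re ^ 2) := by
  have hS : 0 < ∑ j, (μ j).re ^ 2 := by
    have : Nonempty (Fin N) := ⟨⟨0, hN⟩⟩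
    exact Finset.sum_pos (fun j _ => by have := hμ j; positivity) Finset.univ_nonempty
  set S := ∑ j, (μ j).re ^ 2 with hSdef
  refine ⟨by positivity, ?_⟩
  have hVi : ∀ j, ∀ t ≥ (0:ℝ), IntervalIntegrable (V j) volume 0 t := by
    intro j t ht
    refine (intervalIntegrable_const (c := C)).mono_fun (hVmeas j).aestronglyMeasurable ?_
    refine (ae_restrict_iff' measurableSet_uIoc).2 (Eventually.of_forall fun x hx => ?_)
    rw [Set.uIoc_of_le ht] at hx
    have := hVlb j x hx.1.le
    beta_reduce
    rw [Real.norm_of_nonneg (by linarith), Real.norm_eq_abs]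
    exact (hVub j x hx.1.le).trans (le_abs_self C)
  have hQl : ∀ t ≥ (0:ℝ), α₀ * S * t ≤ Q t := by
    intro t ht
    rw [hQ, hSdef, mul_comm α₀, mul_assoc, Finset.sum_mul]
    refine Finset.sum_le_sum fun j _ => mul_le_mul_of_nonneg_left ?_ (sq_nonneg _)
    have := intervalIntegral.integral_mono_on ht (intervalIntegrable_const (c := α₀)) (hVi j t ht)
      (fun x hx => hVlb j x hx.1)
    simp at this
    linarith
  have hQu : ∀ t ≥ (0:ℝ), Q t ≤ C * S * t := by
    intro t ht
    rw [hQ, hSdef, mul_comm C, mul_assoc, Finset.sum_mul]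
    refine Finset.sum_le_sum fun j _ => mul_le_mul_of_nonneg_left ?_ (sq_nonneg _)
    have := intervalIntegral.integral_mono_on ht (hVi j t ht) (intervalIntegrable_const (c := C))
      (fun x hx => hVub j x hx.1)
    simp at this
    linarith
  have hEs : ∀ t ≥ (0:ℝ), E t = E 0 * Real.exp (-(2 * Q t)) := by
    intro t ht
    have key := ode_sol (fun s => ∑ j, 2 * ((μ j).re ^ 2 * V j s))
      (Finset.measurable_fun_sum _ fun j _ => ((hVmeas j).const_mul _).const_mul _)
      (∑ j, 2 * ((μ j).re ^ 2 * C))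
      (fun s hs => Finset.sum_nonneg fun j _ => by
        have := hVlb j s hs
        have : 0 ≤ V j s := by linarith
        positivity)
      (fun s hs => Finset.sum_le_sum fun j _ => by
        have := hVub j s hs
        gcongr) E hEcont (by
        intro t ht
        rw [hE t ht]
        congr 1
        simp_rw [Finset.sum_mul]
        rw [intervalIntegral.integral_finsetSum]
        · rw [Finset.mul_sum]
          refine Finset.sum_congr rfl fun j _ => ?_
          rw [← intervalIntegral.integral_const_mul]
          congr 1
          ext s
          ring
        · intro j _
          exact (((hVi j t ht).const_mul _).const_mul _).mul_continuousOn (hEcont.mono (by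
            rw [Set.uIcc_of_le ht]; exact Set.Icc_subset_Ici_self))) t ht
    rw [key, hQ]
    congr 3
    rw [intervalIntegral.integral_finsetSum
      (fun j _ => (((hVi j t ht).const_mul _).const_mul _)), Finset.mul_sum]
    refine Finset.sum_congr rfl fun j _ => ?_
    rw [intervalIntegral.integral_const_mul, intervalIntegral.integral_const_mul]
  have hform : ∀ t > (0:ℝ), (1 / t) * Real.log (Real.exp (2 * m t) * E t)
      = (Q t / t) * (2 * (m t / Q t) - 2) + Real.log (E 0) / t := by
    intro t ht
    have hQp : 0 < Q t := lt_of_lt_of_le (by positivity) (hQl t ht.le)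
    rw [hEs t ht.le, Real.log_mul (Real.exp_ne_zero _) (by positivity),
      Real.log_mul hE0.ne' (Real.exp_ne_zero _), Real.log_exp, Real.log_exp]
    field_simp
    ring
  have hlog : Tendsto (fun t : ℝ => Real.log (E 0) / t) atTop (nhds 0) :=
    tendsto_const_nhds.div_atTop tendsto_id
  have hv : Tendsto (fun t => α₀ * S * (2 * (m t / Q t) - 2) + Real.log (E 0) / t) atTop
      (nhds (-(2 * α₀ * S))) := by
    have := (((hm.const_mul 2).sub_const 2).const_mul (α₀ * S)).add hlog
    convert this using 2
    ring
  have hm1 : ∀ᶠ t in atTop, m t / Q t < 1 := hm.eventually_lt_const one_pos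
  have hm2 : ∀ᶠ t in atTop, -1 < m t / Q t := hm.eventually_const_lt (by norm_num)
  have hl1 : ∀ᶠ t in atTop, -1 < Real.log (E 0) / t := hlog.eventually_const_lt (by norm_num)
  rw [← hv.limsup_eq]
  refine limsup_le_limsup ?_ ?_ hv.isBoundedUnder_le
  · filter_upwards [hm1, eventually_gt_atTop 0] with t h1 ht
    rw [hform t ht]
    have : α₀ * S ≤ Q t / t := (le_div_iff₀ ht).2 (hQl t ht.le)
    nlinarith
  · refine IsBoundedUnder.isCoboundedUnder_le ⟨C * S * (-4) - 1, ?_⟩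
    rw [eventually_map]
    filter_upwards [hm1, hm2, hl1, eventually_gt_atTop 0] with t h1 h2 h3 ht
    rw [hform t ht]
    have h4 : Q t / t ≤ C * S := (div_le_iff₀ ht).2 (hQu t ht.le)
    have h5 : 0 ≤ Q t / t :=
      div_nonneg (le_trans (by positivity) (hQl t ht.le)) ht.le
    show C * S * (-4) - 1 ≤ _
    nlinarith
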